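/- Let Q² = 0 with H = QQ† + Q†Q on a finite-dimensional complex inner product space, and P a self-adjoint involution anticommuting with Q. Then the Witten index tr(P restricted-to-nothing) := tr(P e^{−βH}) is independent of β and equals dim(ker H ∩ V⁺) − dim(ker H ∩ V⁻), where V± are the ±1 eigenspaces of P. Equivalently, tr(P) = dim(ker H ∩ V⁺) − dim(ker H ∩ V⁻). -/

import Mathlib

/-!
The operator `D = Q + Q†` is self-adjoint with `D² = H`, so `ker H = ker D`, and `D` is injective
on its range. It anticommutes with `P`, hence exchanges `V⁺` and `V⁻`; since `D` embeds `D(V⁺)`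
into `D(V⁻)` and vice versa, these two spaces have the same dimension: bosonic and fermionic states
of positive energy are paired. By rank-nullity only `ker D` contributes to
`dim V⁺ - dim V⁻ = tr P`.
-/

section RankNullity

open Module

variable {K V W : Type*} [DivisionRing K] [AddCommGroup V] [Module K V] [AddCommGroup W]
  [Module K W]

theorem finrank_map_add_finrank_ker_inf (f : V →ₗ[K] W) (A : Submodule K V)
    [FiniteDimensional K A] :
    finrank K (A.map f) + finrank K ↥(LinearMap.ker f ⊓ A) = finrank K A := by
  have h := (f.domRestrict A).finrank_range_add_finrank_ker
  rwa [LinearMap.range_domRestrict, LinearMap.ker_domRestrict,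
    ← Submodule.finrank_map_subtype_eq, Submodule.map_comap_subtype, inf_comm] at h

theorem finrank_map_eq_of_disjoint_ker {f : V →ₗ[K] W} {A : Submodule K V}
    [FiniteDimensional K A] (h : Disjoint (LinearMap.ker f) A) :
    finrank K (A.map f) = finrank K A := by
  rw [← finrank_map_add_finrank_ker_inf f A, h.eq_bot, finrank_bot, add_zero]

variable {D : V →ₗ[K] V} {A B : Submodule K V} [FiniteDimensional K A] [FiniteDimensional K B]

theorem finrank_map_le_finrank_map_of_disjoint_ker_range
    (hD : Disjoint (LinearMap.ker D) (LinearMap.range D)) (hAB : A.map D ≤ B) :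
    finrank K (A.map D) ≤ finrank K (B.map D) :=
  calc
    finrank K (A.map D) = finrank K ((A.map D).map D) :=
      (finrank_map_eq_of_disjoint_ker (hD.mono_right LinearMap.map_le_range)).symm
    _ ≤ finrank K (B.map D) := Submodule.finrank_mono (Submodule.map_mono hAB)

theorem finrank_add_finrank_ker_inf_comm
    (hD : Disjoint (LinearMap.ker D) (LinearMap.range D))
    (hAB : A.map D ≤ B) (hBA : B.map D ≤ A) :
    finrank K A + finrank K ↥(LinearMap.ker D ⊓ B) =
      finrank K B + finrank K ↥(LinearMap.ker D ⊓ A) := by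
  have pairing : finrank K (A.map D) = finrank K (B.map D) :=
    (finrank_map_le_finrank_map_of_disjoint_ker_range hD hAB).antisymm
      (finrank_map_le_finrank_map_of_disjoint_ker_range hD hBA)
  have hA := finrank_map_add_finrank_ker_inf D A
  have hB := finrank_map_add_finrank_ker_inf D B
  omega

end RankNullity

section Involution

open Module End

variable {R M : Type*} [CommRing R] [AddCommGroup M] [Module R M] {P : M →ₗ[R] M}

theorem eigenspace_neg (f : M →ₗ[R] M) (c : R) : eigenspace (-f) c = eigenspace f (-c) := by
  ext x
  simp [neg_eq_iff_eq_neg]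

theorem isProj_eigenspace_one [Invertible (2 : R)] (hP : P ∘ₗ P = LinearMap.id) :
    LinearMap.IsProj (eigenspace P 1) ((⅟2 : R) • (LinearMap.id + P)) where
  map_mem x := by
    have hPx : P (P x) = x := LinearMap.congr_fun hP x
    simp [hPx, add_comm]
  map_id x hx := by
    have hPx : P x = x := by simpa using hx
    simp [hPx]

theorem isProj_eigenspace_neg_one [Invertible (2 : R)] (hP : P ∘ₗ P = LinearMap.id) :
    LinearMap.IsProj (eigenspace P (-1)) ((⅟2 : R) • (LinearMap.id - P)) := by
  have hP_neg : (-P) ∘ₗ (-P) = LinearMap.id := by simpa using hP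
  simpa only [eigenspace_neg, sub_eq_add_neg] using isProj_eigenspace_one hP_neg

theorem map_eigenspace_le_eigenspace_neg {D : M →ₗ[R] M} (hPD : P ∘ₗ D + D ∘ₗ P = 0) (c : R) :
    (eigenspace P c).map D ≤ eigenspace P (-c) := by
  rintro _ ⟨x, hx, rfl⟩
  have hPDx : P (D x) = -D (P x) :=
    eq_neg_of_add_eq_zero_left (LinearMap.congr_fun hPD x)
  rw [mem_eigenspace_iff, hPDx, mem_eigenspace_iff.mp hx, map_smul, neg_smul]

end Involution

section Trace

open Module End

variable {K V : Type*} [Field K] [Invertible (2 : K)] [AddCommGroup V] [Module K V]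
  [FiniteDimensional K V] {P D : V →ₗ[K] V}

theorem trace_eq_finrank_eigenspace_sub (hP : P ∘ₗ P = LinearMap.id) :
    LinearMap.trace K V P =
      (finrank K (eigenspace P 1) : K) - (finrank K (eigenspace P (-1)) : K) := by
  have decomposition :
      P = (⅟2 : K) • (LinearMap.id + P) - (⅟2 : K) • (LinearMap.id - P) := by
    rw [← smul_sub, add_sub_sub_cancel, ← two_smul K P, invOf_smul_smul]
  conv_lhs => rw [decomposition]
  rw [map_sub, (isProj_eigenspace_one hP).trace, (isProj_eigenspace_neg_one hP).trace]

theorem trace_eq_finrank_ker_inf_eigenspace_sub (hP : P ∘ₗ P = LinearMap.id)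
    (hPD : P ∘ₗ D + D ∘ₗ P = 0) (hD : Disjoint (LinearMap.ker D) (LinearMap.range D)) :
    LinearMap.trace K V P =
      (finrank K ↥(LinearMap.ker D ⊓ eigenspace P 1) : K)
      - (finrank K ↥(LinearMap.ker D ⊓ eigenspace P (-1)) : K) := by
  have hpos : (eigenspace P 1).map D ≤ eigenspace P (-1) :=
    map_eigenspace_le_eigenspace_neg hPD 1
  have hneg : (eigenspace P (-1)).map D ≤ eigenspace P 1 := by
    simpa only [neg_neg] using map_eigenspace_le_eigenspace_neg hPD (-1)
  have balance := congrArg (Nat.cast : ℕ → K) (finrank_add_finrank_ker_inf_comm hD hpos hneg)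
  push_cast at balance
  rw [trace_eq_finrank_eigenspace_sub hP]
  linear_combination balance

end Trace

section Supercharge

open LinearMap

variable {𝕜 V : Type*} [RCLike 𝕜] [NormedAddCommGroup V] [InnerProductSpace 𝕜 V]

theorem disjoint_ker_range_of_isSymmetric {D : V →ₗ[𝕜] V} (hD : D.IsSymmetric) :
    Disjoint (ker D) (range D) :=
  hD.orthogonal_range ▸ (range D).orthogonal_disjoint.symm

variable [FiniteDimensional 𝕜 V] {P Q : V →ₗ[𝕜] V}

theorem isSymmetric_add_adjoint (Q : V →ₗ[𝕜] V) : (Q + adjoint Q).IsSymmetric :=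
  (isSymmetric_iff_isSelfAdjoint _).mpr (IsSelfAdjoint.add_star_self Q)

theorem add_adjoint_comp_self (hQ : Q ∘ₗ Q = 0) :
    (Q + adjoint Q) ∘ₗ (Q + adjoint Q) = Q ∘ₗ adjoint Q + adjoint Q ∘ₗ Q := by
  have hQ_adjoint : adjoint Q ∘ₗ adjoint Q = 0 := by
    rw [← adjoint_comp, hQ, map_zero]
  simp only [add_comp, comp_add, hQ, hQ_adjoint, zero_add, add_comm]

theorem ker_comp_adjoint_add_adjoint_comp (hQ : Q ∘ₗ Q = 0) :
    ker (Q ∘ₗ adjoint Q + adjoint Q ∘ₗ Q) = ker (Q + adjoint Q) := by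
  rw [← add_adjoint_comp_self hQ]
  simpa only [(isSymmetric_add_adjoint Q).adjoint_eq] using
    ker_adjoint_comp_self (Q + adjoint Q)

theorem comp_adjoint_add_adjoint_comp_eq_zero (hP : adjoint P = P)
    (hPQ : P ∘ₗ Q + Q ∘ₗ P = 0) : P ∘ₗ adjoint Q + adjoint Q ∘ₗ P = 0 := by
  simpa only [map_add, adjoint_comp, hP, map_zero, add_comm] using congrArg adjoint hPQ

theorem comp_add_adjoint_add_add_adjoint_comp_eq_zero (hP : adjoint P = P)
    (hPQ : P ∘ₗ Q + Q ∘ₗ P = 0) :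
    P ∘ₗ (Q + adjoint Q) + (Q + adjoint Q) ∘ₗ P = 0 := by
  rw [comp_add, add_comp, add_add_add_comm, hPQ,
    comp_adjoint_add_adjoint_comp_eq_zero hP hPQ, add_zero]

end Supercharge

theorem witten_index_eq_trace_parity_general
    {𝕜 V : Type*} [RCLike 𝕜] [NormedAddCommGroup V] [InnerProductSpace 𝕜 V]
    [FiniteDimensional 𝕜 V]
    (Q H P : V →ₗ[𝕜] V) (hQ : Q ∘ₗ Q = 0)
    (hH : H = Q ∘ₗ LinearMap.adjoint Q + LinearMap.adjoint Q ∘ₗ Q)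
    (hP : LinearMap.adjoint P = P) (hP2 : P ∘ₗ P = LinearMap.id)
    (hPQ : P ∘ₗ Q + Q ∘ₗ P = 0) :
    LinearMap.trace 𝕜 V P =
      (Module.finrank 𝕜 ↥(LinearMap.ker H ⊓ Module.End.eigenspace P 1) : 𝕜)
      - (Module.finrank 𝕜 ↥(LinearMap.ker H ⊓ Module.End.eigenspace P (-1)) : 𝕜) := by
  rw [hH, ker_comp_adjoint_add_adjoint_comp hQ]
  exact trace_eq_finrank_ker_inf_eigenspace_sub hP2
    (comp_add_adjoint_add_add_adjoint_comp_eq_zero hP hPQ)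
    (disjoint_ker_range_of_isSymmetric (isSymmetric_add_adjoint Q))

/-- Witten index: for `Q² = 0`, `H = QQ† + Q†Q`, and a self-adjoint involution
`P` anticommuting with `Q`,
`tr(P) = dim(ker H ∩ V⁺) − dim(ker H ∩ V⁻)` where `V±` are the `±1`
eigenspaces of `P`. -/
theorem witten_index_eq_trace_parity
    {V : Type*} [NormedAddCommGroup V] [InnerProductSpace ℂ V]
    [FiniteDimensional ℂ V]
    (Q H P : V →ₗ[ℂ] V) (hQ : Q ∘ₗ Q = 0)
    (hH : H = Q ∘ₗ LinearMap.adjoint Q + LinearMap.adjoint Q ∘ₗ Q)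
    (hP : LinearMap.adjoint P = P) (hP2 : P ∘ₗ P = LinearMap.id)
    (hPQ : P ∘ₗ Q + Q ∘ₗ P = 0) :
    LinearMap.trace ℂ V P =
      (Module.finrank ℂ ↥(LinearMap.ker H ⊓ Module.End.eigenspace P 1) : ℂ)
      - (Module.finrank ℂ ↥(LinearMap.ker H ⊓ Module.End.eigenspace P (-1)) : ℂ) :=
  witten_index_eq_trace_parity_general Q H P hQ hH hP hP2 hPQ
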